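/- Let X be a nonempty set, ρ ≥ 0, and let d be a suprametric on X (i.e. a b-suprametric with b = 1) such that (X,d) is complete. Let f : X → X and suppose there exists a Matkowski function ψ such that d(f x, f y) ≤ ψ(d(x,y)) for all x, y ∈ X. Then f has a unique fixed point x⋆ in X, and for every x₀ ∈ X the Picard iterates satisfy d(fⁿ x₀, x⋆) → 0 as n → ∞. -/

import Mathlib

/-!
A Matkowski function satisfies `ψ t < t` for `t > 0`, and `d (fⁿ x) (fⁿ y) ≤ ψⁿ t → 0` for any
`t > 0` with `d x y ≤ t`. In particular the distances between consecutive terms of a Picard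
sequence, and the self-distances of its terms, tend to `0`, so for `ε > 0` and `c = f^N a` with `N`
large, `d c c ≤ ε` and `ψ ε + d (f c) c + ρ * ψ ε * d (f c) c ≤ ε`. The relaxed triangle inequality
through `f c` then shows that `f` maps the ball of radius `ε` about `c` into itself. Hence the whole
tail of the orbit stays in that ball and the orbit is Cauchy. Its limit is fixed by uniqueness of
limits, and it attracts every other orbit because any two orbits approach each other.
-/

section

open Filter Function Set Topology

/-- A Matkowski function: a monotone self-map of `[0, ∞)` whose iterates tend to `0` at every
positive point. It is encoded as a function on `ℝ` whose values at negative reals are arbitrary. -/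
structure IsMatkowski (ψ : ℝ → ℝ) : Prop where
  nonneg : ∀ t, 0 ≤ t → 0 ≤ ψ t
  monotoneOn : MonotoneOn ψ (Ici 0)
  tendsto_iterate : ∀ t, 0 < t → Tendsto (fun n => ψ^[n] t) atTop (𝓝 0)

/-- A dislocated (or metric-like) suprametric with constant `ρ`: a suprametric except that
self-distances `d x x` are allowed to be positive. This is the setting in which the fixed point
argument takes place. -/
structure IsDislocatedSuprametric {X : Type*} (ρ : ℝ) (d : X → X → ℝ) : Prop where
  rho_nonneg : 0 ≤ ρ
  nonneg : ∀ x y, 0 ≤ d x y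
  eq_of_dist_eq_zero : ∀ x y, d x y = 0 → x = y
  symm : ∀ x y, d x y = d y x
  triangle : ∀ x y z, d x y ≤ d x z + d z y + ρ * d x z * d z y

variable {X : Type*} {ρ : ℝ} {d : X → X → ℝ} {f : X → X} {ψ : ℝ → ℝ}

namespace IsMatkowski

theorem lt_self (hψ : IsMatkowski ψ) {t : ℝ} (ht : 0 < t) : ψ t < t := by
  by_contra! hle
  have le_iterate (n : ℕ) : t ≤ ψ^[n] t := by
    induction n with
    | zero => exact le_rfl
    | succ n ih =>
      rw [iterate_succ_apply']
      exact hle.trans (hψ.monotoneOn ht.le (ht.le.trans ih) ih)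
  exact ht.not_ge (ge_of_tendsto' (hψ.tendsto_iterate t ht) le_iterate)

theorem map_zero (hψ : IsMatkowski ψ) : ψ 0 = 0 := by
  refine le_antisymm (le_of_forall_gt fun t ht => ?_) (hψ.nonneg 0 le_rfl)
  exact (hψ.monotoneOn self_mem_Ici ht.le ht.le).trans_lt (hψ.lt_self ht)

theorem le_self (hψ : IsMatkowski ψ) {t : ℝ} (ht : 0 ≤ t) : ψ t ≤ t := by
  rcases ht.eq_or_lt with rfl | ht
  · exact hψ.map_zero.le
  · exact (hψ.lt_self ht).le

theorem tendsto_dist_iterate_iterate (hψ : IsMatkowski ψ) (hd : ∀ x y, 0 ≤ d x y)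
    (hf : ∀ x y, d (f x) (f y) ≤ ψ (d x y)) (x y : X) :
    Tendsto (fun n => d (f^[n] x) (f^[n] y)) atTop (𝓝 0) := by
  -- The iterates of `ψ` are only known to vanish at positive points, and `d x y` may be `0`.
  have hpos : 0 < d x y + 1 := add_pos_of_nonneg_of_pos (hd x y) one_pos
  refine squeeze_zero (fun _ => hd _ _) (fun n => ?_) (hψ.tendsto_iterate _ hpos)
  induction n with
  | zero => exact le_add_of_nonneg_right zero_le_one
  | succ n ih =>
    simp only [iterate_succ_apply']
    exact (hf _ _).trans (hψ.monotoneOn (hd _ _) ((hd _ _).trans ih) ih)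

end IsMatkowski

namespace IsDislocatedSuprametric

theorem eq_of_tendsto (hd : IsDislocatedSuprametric ρ d) {ι : Type*} {l : Filter ι} [l.NeBot]
    {u : ι → X} {x y : X} (hx : Tendsto (fun i => d (u i) x) l (𝓝 0))
    (hy : Tendsto (fun i => d (u i) y) l (𝓝 0)) : x = y := by
  simp only [hd.symm _ x] at hx
  have hsum : Tendsto (fun i => d x (u i) + d (u i) y + ρ * d x (u i) * d (u i) y) l (𝓝 0) := by
    simpa using (hx.add hy).add ((hx.const_mul ρ).mul hy)
  have hxy : d x y ≤ 0 := ge_of_tendsto' hsum fun i => hd.triangle x y (u i)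
  exact hd.eq_of_dist_eq_zero x y (hxy.antisymm (hd.nonneg x y))

theorem tendsto_dist_of_eventually_dist_le (hd : IsDislocatedSuprametric ρ d) {ι : Type*}
    {l : Filter ι} {u : ι → X} (hu : ∀ ε, 0 < ε → ∃ c, ∀ᶠ i in l, d (u i) c ≤ ε) :
    Tendsto (fun p : ι × ι => d (u p.1) (u p.2)) (l ×ˢ l) (𝓝 0) := by
  have hbound : Tendsto (fun ε : ℝ => ε + ε + ρ * ε * ε) (𝓝[>] 0) (𝓝 0) :=
    tendsto_nhdsWithin_of_tendsto_nhds (Continuous.tendsto' (by fun_prop) 0 0 (by simp))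
  refine tendsto_order.2 ⟨fun r hr => .of_forall fun p => hr.trans_le (hd.nonneg _ _),
    fun r hr => ?_⟩
  obtain ⟨ε, hεr, hε : 0 < ε⟩ :=
    ((hbound.eventually_lt_const hr).and self_mem_nhdsWithin).exists
  obtain ⟨c, hc⟩ := hu ε hε
  filter_upwards [hc.prod_mk hc] with p hp
  have hcq : d c (u p.2) ≤ ε := hd.symm c _ ▸ hp.2
  have hρ := hd.rho_nonneg
  have hnonneg := hd.nonneg c (u p.2)
  calc d (u p.1) (u p.2)
      ≤ d (u p.1) c + d c (u p.2) + ρ * d (u p.1) c * d c (u p.2) := hd.triangle _ _ _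
    _ ≤ ε + ε + ρ * ε * ε := by gcongr; exacts [hp.1, hp.1]
    _ < r := hεr

theorem mapsTo_setOf_dist_le (hd : IsDislocatedSuprametric ρ d) (hψ : MonotoneOn ψ (Ici 0))
    (hf : ∀ x y, d (f x) (f y) ≤ ψ (d x y)) {c : X} {ε : ℝ}
    (hc : ψ ε + d (f c) c + ρ * ψ ε * d (f c) c ≤ ε) :
    MapsTo f {x | d x c ≤ ε} {x | d x c ≤ ε} := by
  intro x (hx : d x c ≤ ε)
  have hfx : d (f x) (f c) ≤ ψ ε :=
    (hf x c).trans (hψ (hd.nonneg x c) ((hd.nonneg x c).trans hx) hx)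
  have hρ := hd.rho_nonneg
  have hnonneg := hd.nonneg (f c) c
  calc d (f x) c
      ≤ d (f x) (f c) + d (f c) c + ρ * d (f x) (f c) * d (f c) c := hd.triangle _ _ _
    _ ≤ ψ ε + d (f c) c + ρ * ψ ε * d (f c) c := by gcongr
    _ ≤ ε := hc

theorem exists_eventually_dist_iterate_le (hd : IsDislocatedSuprametric ρ d) (hψ : IsMatkowski ψ)
    (hf : ∀ x y, d (f x) (f y) ≤ ψ (d x y)) (a : X) {ε : ℝ} (hε : 0 < ε) :
    ∃ c, ∀ᶠ n in atTop, d (f^[n] a) c ≤ ε := by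
  have hself : Tendsto (fun n => d (f^[n] a) (f^[n] a)) atTop (𝓝 0) :=
    hψ.tendsto_dist_iterate_iterate hd.nonneg hf a a
  have hstep : Tendsto (fun n => d (f (f^[n] a)) (f^[n] a)) atTop (𝓝 0) := by
    simpa only [← iterate_succ_apply', iterate_succ_apply] using
      hψ.tendsto_dist_iterate_iterate hd.nonneg hf (f a) a
  have hbound : Tendsto (fun n => ψ ε + d (f (f^[n] a)) (f^[n] a)
      + ρ * ψ ε * d (f (f^[n] a)) (f^[n] a)) atTop (𝓝 (ψ ε)) := by
    simpa using (hstep.const_add (ψ ε)).add (hstep.const_mul (ρ * ψ ε))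
  obtain ⟨N, hN, hNN⟩ := ((hbound.eventually_lt_const (hψ.lt_self hε)).and
    (hself.eventually_lt_const hε)).exists
  refine ⟨f^[N] a, eventually_atTop.2 ⟨N, fun n hn => ?_⟩⟩
  obtain ⟨k, rfl⟩ := Nat.exists_eq_add_of_le' hn
  rw [iterate_add_apply]
  exact (hd.mapsTo_setOf_dist_le hψ.monotoneOn hf hN.le).iterate k hNN.le

theorem tendsto_dist_iterate_prod (hd : IsDislocatedSuprametric ρ d) (hψ : IsMatkowski ψ)
    (hf : ∀ x y, d (f x) (f y) ≤ ψ (d x y)) (a : X) :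
    Tendsto (fun p : ℕ × ℕ => d (f^[p.1] a) (f^[p.2] a)) atTop (𝓝 0) := by
  rw [← prod_atTop_atTop_eq]
  exact hd.tendsto_dist_of_eventually_dist_le fun _ hε =>
    hd.exists_eventually_dist_iterate_le hψ hf a hε

theorem isFixedPt_of_tendsto_iterate (hd : IsDislocatedSuprametric ρ d) (hψ : IsMatkowski ψ)
    (hf : ∀ x y, d (f x) (f y) ≤ ψ (d x y)) {a x : X}
    (hx : Tendsto (fun n => d (f^[n] a) x) atTop (𝓝 0)) : IsFixedPt f x := by
  have hfx : Tendsto (fun n => d (f^[n + 1] a) (f x)) atTop (𝓝 0) := by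
    refine squeeze_zero (fun _ => hd.nonneg _ _) (fun n => ?_) hx
    rw [iterate_succ_apply']
    exact (hf _ _).trans (hψ.le_self (hd.nonneg _ _))
  exact hd.eq_of_tendsto hfx (hx.comp (tendsto_add_atTop_nat 1))

end IsDislocatedSuprametric

theorem suprametric_matkowski_fixed_point_general (hd : IsDislocatedSuprametric ρ d)
    (hψ : IsMatkowski ψ) (hf : ∀ x y, d (f x) (f y) ≤ ψ (d x y)) (a : X)
    (ha : Tendsto (fun p : ℕ × ℕ => d (f^[p.1] a) (f^[p.2] a)) atTop (𝓝 0) →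
      ∃ x, Tendsto (fun n => d (f^[n] a) x) atTop (𝓝 0)) :
    ∃ x, IsFixedPt f x ∧ (∀ y, IsFixedPt f y → y = x) ∧
      ∀ x₀, Tendsto (fun n => d (f^[n] x₀) x) atTop (𝓝 0) := by
  obtain ⟨x, hx⟩ := ha (hd.tendsto_dist_iterate_prod hψ hf a)
  have hfix : IsFixedPt f x := hd.isFixedPt_of_tendsto_iterate hψ hf hx
  have hattract (x₀ : X) : Tendsto (fun n => d (f^[n] x₀) x) atTop (𝓝 0) := by
    simpa only [iterate_fixed hfix] using hψ.tendsto_dist_iterate_iterate hd.nonneg hf x₀ x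
  refine ⟨x, hfix, fun y hy => hd.eq_of_dist_eq_zero y x ?_, hattract⟩
  have hconst : Tendsto (fun _ : ℕ => d y x) atTop (𝓝 0) := by
    simpa only [iterate_fixed hy] using hattract y
  exact tendsto_nhds_unique tendsto_const_nhds hconst

end

/-- **Corollary.** Let `X` be a nonempty set, `ρ ≥ 0`, and `d` a complete suprametric
on `X` (a `b`-suprametric with `b = 1`). If `f : X → X` satisfies
`d (f x) (f y) ≤ ψ (d x y)` for a Matkowski function `ψ`, then `f` has a unique fixed
point and every Picard iteration converges to it. -/
theorem suprametric_matkowski_fixed_point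
    {X : Type*} [Nonempty X] (ρ : ℝ) (hρ : 0 ≤ ρ)
    (d : X → X → ℝ)
    (hd_nonneg : ∀ x y, 0 ≤ d x y)
    (hd_eq : ∀ x y, d x y = 0 ↔ x = y)
    (hd_symm : ∀ x y, d x y = d y x)
    (hd_tri : ∀ x y z, d x y ≤ d x z + d z y + ρ * d x z * d z y)
    (hd_complete : ∀ u : ℕ → X,
      Filter.Tendsto (fun pq : ℕ × ℕ => d (u pq.1) (u pq.2)) Filter.atTop (nhds 0) →
      ∃ x : X, Filter.Tendsto (fun n => d (u n) x) Filter.atTop (nhds 0))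
    (f : X → X) (ψ : ℝ → ℝ)
    (hψ_nonneg : ∀ t, 0 ≤ t → 0 ≤ ψ t)
    (hψ_mono : MonotoneOn ψ (Set.Ici 0))
    (hψ_iter : ∀ t, 0 < t →
      Filter.Tendsto (fun n => ψ^[n] t) Filter.atTop (nhds 0))
    (h_contr : ∀ x y, d (f x) (f y) ≤ ψ (d x y)) :
    ∃ xs : X, f xs = xs ∧ (∀ y, f y = y → y = xs) ∧
      ∀ x₀ : X, Filter.Tendsto (fun n => d (f^[n] x₀) xs) Filter.atTop (nhds 0) := by
  obtain ⟨a⟩ := ‹Nonempty X›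
  exact suprametric_matkowski_fixed_point_general
    ⟨hρ, hd_nonneg, fun x y => (hd_eq x y).1, hd_symm, hd_tri⟩
    ⟨hψ_nonneg, hψ_mono, hψ_iter⟩ h_contr a (hd_complete (f^[·] a))
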